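/- Let f : ℤⁿ → ℝ ∪ {+∞} be a locally discrete midpoint convex function. Then discrete midpoint convexity f(x) + f(y) ≥ f(⌈(x+y)/2⌉) + f(⌊(x+y)/2⌋) holds for all x, y ∈ ℤⁿ with x ≤ y componentwise. -/

import Mathlib

/-- The ℓ∞-norm of an integer vector, as a natural number. -/
def linf {n : ℕ} (z : Fin n → ℤ) : ℕ :=
  Finset.univ.sup fun i => (z i).natAbs

/-- Componentwise round-up of (x+y)/2. -/
def avgUp {n : ℕ} (x y : Fin n → ℤ) : Fin n → ℤ :=
  fun i => ⌈((x i + y i : ℚ)) / 2⌉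

/-- Componentwise round-down of (x+y)/2. -/
def avgDown {n : ℕ} (x y : Fin n → ℤ) : Fin n → ℤ :=
  fun i => ⌊((x i + y i : ℚ)) / 2⌋

/-- A set `S ⊆ ℤⁿ` is discrete midpoint convex. -/
def DMCSet {n : ℕ} (S : Set (Fin n → ℤ)) : Prop :=
  ∀ ⦃x⦄, x ∈ S → ∀ ⦃y⦄, y ∈ S → 2 ≤ linf (x - y) →
    avgUp x y ∈ S ∧ avgDown x y ∈ S

/-- `f` satisfies discrete midpoint convexity for the pair `(x, y)`.
Values are in `ℝ ∪ {+∞}`, modeled as `WithTop ℝ`. -/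
def DMCPair {n : ℕ} (f : (Fin n → ℤ) → WithTop ℝ) (x y : Fin n → ℤ) : Prop :=
  f (avgUp x y) + f (avgDown x y) ≤ f x + f y

/-- `f` is globally discrete midpoint convex. -/
def GloballyDMC {n : ℕ} (f : (Fin n → ℤ) → WithTop ℝ) : Prop :=
  ∀ x y : Fin n → ℤ, 2 ≤ linf (x - y) → DMCPair f x y

/-- The effective domain of `f`. -/
def effDom {n : ℕ} (f : (Fin n → ℤ) → WithTop ℝ) : Set (Fin n → ℤ) :=
  {x | f x ≠ ⊤}

/-- `f` is locally discrete midpoint convex. -/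
def LocallyDMC {n : ℕ} (f : (Fin n → ℤ) → WithTop ℝ) : Prop :=
  DMCSet (effDom f) ∧ ∀ x y : Fin n → ℤ, linf (x - y) = 2 → DMCPair f x y

/-!
For `x ≤ y`, write `y - x` as the sum of the indicators of its superlevel sets
`{i | k < y i - x i}`, `k = 0, 1, 2, …`. The even layers add up to `⌈(x + y) / 2⌉ - x` and the odd
ones to `⌊(x + y) / 2⌋ - x`. Let `g J` be the value of `f` at `x` plus the layers indexed by `J`.
Midpoint convexity of the domain makes every `g J` finite as soon as `f x` and `f y` are. Two nested
layers produce a pair at `ℓ∞`-distance at most `2`, so local midpoint convexity is the exchange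
inequality `g (J ∪ {k}) + g (J ∪ {l}) ≤ g J + g (J ∪ {k, l})`, and finiteness lets these telescope
to supermodularity of `g`. The claim is the case of the even layers against the odd layers.
-/

section Supermodular

variable {α M : Type*} [DecidableEq α] [AddCommSemigroup M] [Preorder M] [AddLeftMono M]

theorem add_le_add_of_adjacent_exchange {a b b' c d d' : M} (hb : AddLECancellable b)
    (hd : AddLECancellable d) (h : a + b ≤ c + d) (h' : b' + d ≤ b + d') :
    a + b' ≤ c + d' := by
  apply hb.add hd
  calc b + d + (a + b') = a + b + (b' + d) := by ac_rfl
    _ ≤ c + d + (b + d') := add_le_add h h'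
    _ = b + d + (c + d') := by ac_rfl

theorem insert_add_union_le_of_insert_exchange {g : Finset α → M}
    (hcancel : ∀ J, AddLECancellable (g J))
    (hexchange : ∀ J k l, k ≠ l → k ∉ J → l ∉ J →
      g (insert k J) + g (insert l J) ≤ g J + g (insert k (insert l J)))
    {k : α} {J D : Finset α} (hk : k ∉ J ∪ D) :
    g (insert k J) + g (J ∪ D) ≤ g J + g (insert k (J ∪ D)) := by
  induction D using Finset.induction_on with
  | empty => rw [Finset.union_empty, add_comm]
  | insert l D _ ih =>
    rw [Finset.union_insert] at hk ⊢
    by_cases hl : l ∈ J ∪ D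
    · rw [Finset.insert_eq_of_mem hl] at hk ⊢
      exact ih hk
    · obtain ⟨hkl, hk⟩ := not_or.1 (mt Finset.mem_insert.2 hk)
      refine add_le_add_of_adjacent_exchange (hcancel _) (hcancel _) (ih hk) ?_
      rw [Finset.insert_comm]
      exact hexchange _ l k (Ne.symm hkl) hl hk

theorem add_le_inter_add_union_of_insert_exchange {g : Finset α → M}
    (hcancel : ∀ J, AddLECancellable (g J))
    (hexchange : ∀ J k l, k ≠ l → k ∉ J → l ∉ J →
      g (insert k J) + g (insert l J) ≤ g J + g (insert k (insert l J)))
    (J L : Finset α) :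
    g J + g L ≤ g (J ∩ L) + g (J ∪ L) := by
  suffices hdisj : ∀ D, Disjoint D J → g J + g (J ∩ L ∪ D) ≤ g (J ∩ L) + g (J ∪ D) by
    have hL : J ∩ L ∪ L \ J = L := by
      rw [Finset.inter_comm, Finset.union_comm, Finset.sdiff_union_inter]
    simpa only [hL, Finset.union_sdiff_self_eq_union] using hdisj (L \ J) Finset.sdiff_disjoint
  intro D
  induction D using Finset.induction_on with
  | empty => intro _; rw [Finset.union_empty, Finset.union_empty, add_comm]
  | insert k D hkD ih =>
    intro hD
    obtain ⟨hkJ, hD⟩ := Finset.disjoint_insert_left.1 hD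
    have hunion : J ∩ L ∪ D ∪ J = J ∪ D := by
      rw [Finset.union_right_comm, Finset.union_eq_right.2 Finset.inter_subset_left]
    have hinsert := insert_add_union_le_of_insert_exchange hcancel hexchange
      (k := k) (J := J ∩ L ∪ D) (D := J) (by simp [hunion, hkJ, hkD])
    rw [hunion] at hinsert
    rw [Finset.union_insert, Finset.union_insert]
    exact add_le_add_of_adjacent_exchange (hcancel _) (hcancel _) (ih hD) hinsert

end Supermodular

section Midpoint

variable {n m : ℕ} {x y z : Fin n → ℤ}

theorem linf_le_iff : linf z ≤ m ↔ ∀ i, (z i).natAbs ≤ m := by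
  simp [linf]

theorem natAbs_le_linf (z : Fin n → ℤ) (i : Fin n) : (z i).natAbs ≤ linf z :=
  linf_le_iff.1 le_rfl i

theorem avgDown_apply (x y : Fin n → ℤ) (i : Fin n) : avgDown x y i = (x i + y i) / 2 := by
  simpa [avgDown] using Rat.floor_intCast_div_natCast (x i + y i) 2

theorem avgUp_apply (x y : Fin n → ℤ) (i : Fin n) : avgUp x y i = (x i + y i + 1) / 2 := by
  have hceil : avgUp x y i = -(-(x i + y i) / 2) := by
    simpa [avgUp] using Rat.ceil_intCast_div_natCast (x i + y i) 2
  omega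

theorem avgUp_add_avgDown (x y : Fin n → ℤ) : avgUp x y + avgDown x y = x + y := by
  funext i
  simp only [Pi.add_apply, avgUp_apply, avgDown_apply]
  omega

theorem le_avgDown (hxy : x ≤ y) : x ≤ avgDown x y := fun i => by
  have : x i ≤ y i := hxy i
  change x i ≤ avgDown x y i
  rw [avgDown_apply]
  omega

theorem le_avgUp (hxy : x ≤ y) : x ≤ avgUp x y := fun i => by
  have : x i ≤ y i := hxy i
  change x i ≤ avgUp x y i
  rw [avgUp_apply]
  omega

theorem linf_sub_avgDown_le (x y : Fin n → ℤ) :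
    linf (x - avgDown x y) ≤ (linf (x - y) + 1) / 2 :=
  linf_le_iff.2 fun i => by
    have := natAbs_le_linf (x - y) i
    simp only [Pi.sub_apply, avgDown_apply] at this ⊢
    omega

theorem linf_sub_avgUp_le (x y : Fin n → ℤ) :
    linf (x - avgUp x y) ≤ (linf (x - y) + 1) / 2 :=
  linf_le_iff.2 fun i => by
    have := natAbs_le_linf (x - y) i
    simp only [Pi.sub_apply, avgUp_apply] at this ⊢
    omega

end Midpoint

section Layers

variable {n m : ℕ} {x y t : Fin n → ℤ}

/-- The indicator vector of the strict superlevel set `{i | k < t i}`. Numbering the layers from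
`0` makes the halves of `t` pick out the layers of even and of odd index. -/
def layer (t : Fin n → ℤ) (k : ℕ) : Fin n → ℤ :=
  fun i => if (k : ℤ) < t i then 1 else 0

/-- The point reached from `x` by adding the layers of `y - x` indexed by `J`. -/
def addLayers (x y : Fin n → ℤ) (J : Finset ℕ) : Fin n → ℤ :=
  x + ∑ k ∈ J, layer (y - x) k

theorem layer_nonneg (t : Fin n → ℤ) (k : ℕ) : 0 ≤ layer t k := fun i => by
  unfold layer
  split_ifs <;> simp

theorem layer_le_one (t : Fin n → ℤ) (k : ℕ) : layer t k ≤ 1 := fun i => by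
  unfold layer
  split_ifs <;> simp

theorem layer_antitone (t : Fin n → ℤ) : Antitone (layer t) := fun k l hkl i => by
  simp only [layer]
  split_ifs <;> omega

theorem layer_le (ht : 0 ≤ t) (k : ℕ) : layer t k ≤ t := fun i => by
  have : 0 ≤ t i := ht i
  simp only [layer]
  split_ifs <;> omega

theorem layer_sub_layer_of_lt {k l : ℕ} (hlk : l < k) (t : Fin n → ℤ) :
    layer (t - layer t k) l = layer t l := by
  funext i
  simp only [layer, Pi.sub_apply]
  split_ifs <;> omega

theorem layer_avgUp_sub (x y : Fin n → ℤ) (k : ℕ) :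
    layer (avgUp x y - x) k = layer (y - x) (2 * k) := by
  funext i
  simp only [layer, Pi.sub_apply, avgUp_apply]
  split_ifs <;> omega

theorem layer_avgDown_sub (x y : Fin n → ℤ) (k : ℕ) :
    layer (avgDown x y - x) k = layer (y - x) (2 * k + 1) := by
  funext i
  simp only [layer, Pi.sub_apply, avgDown_apply]
  split_ifs <;> omega

theorem sum_range_layer_apply {i : Fin n} (ht : 0 ≤ t i) (m : ℕ) :
    ∑ k ∈ Finset.range m, layer t k i = min (t i) m := by
  induction m with
  | zero => simp [ht]
  | succ m ih =>
    rw [Finset.sum_range_succ, ih]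
    unfold layer
    split_ifs <;> omega

theorem addLayers_range (hxy : x ≤ y) (hm : linf (x - y) ≤ m) :
    addLayers x y (Finset.range m) = y := by
  funext i
  have hnonneg : 0 ≤ (y - x) i := sub_nonneg.2 (hxy i)
  have hbound := linf_le_iff.1 hm i
  rw [addLayers, Pi.add_apply, Finset.sum_apply, sum_range_layer_apply hnonneg]
  simp only [Pi.sub_apply] at hnonneg hbound ⊢
  omega

theorem addLayers_empty (x y : Fin n → ℤ) : addLayers x y ∅ = x := by
  simp [addLayers]

theorem addLayers_insert {k : ℕ} {J : Finset ℕ} (hk : k ∉ J) (x y : Fin n → ℤ) :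
    addLayers x y (insert k J) = addLayers x y J + layer (y - x) k := by
  rw [addLayers, addLayers, Finset.sum_insert hk]
  abel

theorem addLayers_union {J L : Finset ℕ} (hJL : Disjoint J L) (x y : Fin n → ℤ) :
    addLayers x y (J ∪ L) = addLayers x y J + addLayers x y L - x := by
  rw [addLayers, addLayers, addLayers, Finset.sum_union hJL]
  abel

theorem addLayers_even (hxy : x ≤ y) (hm : linf (x - y) ≤ m) :
    addLayers x y ((Finset.range m).image (2 * ·)) = avgUp x y := by
  have hbound : linf (x - avgUp x y) ≤ m := (linf_sub_avgUp_le x y).trans (by omega)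
  rw [← addLayers_range (le_avgUp hxy) hbound, addLayers, addLayers,
    Finset.sum_image fun _ _ _ _ h => by simpa using h]
  simp only [layer_avgUp_sub]

theorem addLayers_odd (hxy : x ≤ y) (hm : linf (x - y) ≤ m) :
    addLayers x y ((Finset.range m).image (2 * · + 1)) = avgDown x y := by
  have hbound : linf (x - avgDown x y) ≤ m := (linf_sub_avgDown_le x y).trans (by omega)
  rw [← addLayers_range (le_avgDown hxy) hbound, addLayers, addLayers,
    Finset.sum_image fun _ _ _ _ h => by simpa using h]
  simp only [layer_avgDown_sub]

theorem disjoint_image_even_image_odd (s t : Finset ℕ) :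
    Disjoint (s.image (2 * ·)) (t.image (2 * · + 1)) := by
  simp only [Finset.disjoint_left, Finset.mem_image]
  omega

end Layers

namespace DMCSet

variable {n : ℕ} {S : Set (Fin n → ℤ)} {x y : Fin n → ℤ}

theorem add_layer_mem (hS : DMCSet S) (hx : x ∈ S) (hy : y ∈ S) (hxy : x ≤ y) (k : ℕ) :
    x + layer (y - x) k ∈ S := by
  induction hd : linf (x - y) using Nat.strong_induction_on generalizing y k with
  | _ d ih =>
    by_cases hfar : 2 ≤ linf (x - y)
    · obtain ⟨hup, hdown⟩ := hS hx hy hfar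
      have hup_lt : linf (x - avgUp x y) < d := (linf_sub_avgUp_le x y).trans_lt (by omega)
      have hdown_lt : linf (x - avgDown x y) < d := (linf_sub_avgDown_le x y).trans_lt (by omega)
      obtain ⟨j, rfl | rfl⟩ := k.even_or_odd'
      · rw [← layer_avgUp_sub]
        exact ih _ hup_lt hup (le_avgUp hxy) j rfl
      · rw [← layer_avgDown_sub]
        exact ih _ hdown_lt hdown (le_avgDown hxy) j rfl
    · obtain rfl | hk := Nat.eq_zero_or_pos k
      · have hlayer : x + layer (y - x) 0 = y := by
          simpa [addLayers] using addLayers_range hxy (m := 1) (by omega)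
        rwa [hlayer]
      · have hlayer : layer (y - x) k = 0 := by
          funext i
          have := natAbs_le_linf (x - y) i
          simp only [layer, Pi.sub_apply, Pi.zero_apply, ite_eq_right_iff] at this ⊢
          omega
        rwa [hlayer, add_zero]

theorem addLayers_mem (hS : DMCSet S) (hx : x ∈ S) (hy : y ∈ S) (hxy : x ≤ y) (J : Finset ℕ) :
    addLayers x y J ∈ S := by
  induction J using Finset.induction_on_max generalizing x with
  | empty => rwa [addLayers_empty]
  | insert k J hJ ih =>
    -- Adding the top layer first leaves the lower layers of the remaining difference unchanged.
    have hrest : addLayers x y (insert k J) = addLayers (x + layer (y - x) k) y J := by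
      rw [addLayers_insert (fun hk => (hJ k hk).false), addLayers, addLayers, ← sub_sub,
        Finset.sum_congr rfl fun l hl => layer_sub_layer_of_lt (hJ l hl) (y - x)]
      abel
    rw [hrest]
    exact ih (hS.add_layer_mem hx hy hxy k)
      (le_sub_iff_add_le'.1 (layer_le (sub_nonneg.2 hxy) k))

end DMCSet

namespace LocallyDMC

variable {n : ℕ} {f : (Fin n → ℤ) → WithTop ℝ}

theorem add_nested_le (h : LocallyDMC f) (z : Fin n → ℤ) {u v : Fin n → ℤ}
    (hv : 0 ≤ v) (hvu : v ≤ u) (hu : u ≤ 1) :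
    f (z + u) + f (z + v) ≤ f z + f (z + u + v) := by
  have hv' : ∀ i, 0 ≤ v i := hv
  have hvu' : ∀ i, v i ≤ u i := hvu
  have hu' : ∀ i, u i ≤ 1 := hu
  obtain rfl | hne := eq_or_ne v 0
  · rw [add_zero, add_zero, add_comm]
  obtain ⟨j, hj⟩ := Function.ne_iff.1 hne
  have hdist : linf (z - (z + u + v)) = 2 := by
    refine le_antisymm (linf_le_iff.2 fun i => ?_) (le_trans ?_ (natAbs_le_linf _ j))
    · simp only [Pi.sub_apply, Pi.add_apply]
      grind
    · simp only [Pi.sub_apply, Pi.add_apply, Pi.zero_apply] at hj ⊢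
      grind
  have hup : avgUp z (z + u + v) = z + u := by
    funext i
    simp only [avgUp_apply, Pi.add_apply]
    grind
  have hdown : avgDown z (z + u + v) = z + v := by
    funext i
    simp only [avgDown_apply, Pi.add_apply]
    grind
  simpa only [DMCPair, hup, hdown] using h.2 z (z + u + v) hdist

theorem addLayers_insert_exchange (h : LocallyDMC f) (x y : Fin n → ℤ) {J : Finset ℕ} {k l : ℕ}
    (hkl : k ≠ l) (hk : k ∉ J) (hl : l ∉ J) :
    f (addLayers x y (insert k J)) + f (addLayers x y (insert l J)) ≤
      f (addLayers x y J) + f (addLayers x y (insert k (insert l J))) := by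
  wlog hlt : k < l generalizing k l
  · rw [add_comm (f _), Finset.insert_comm]
    exact this hkl.symm hl hk (by omega)
  have hlk : l ∉ insert k J := by simp [hl, hkl.symm]
  rw [Finset.insert_comm, addLayers_insert hlk, addLayers_insert hk, addLayers_insert hl]
  exact h.add_nested_le _ (layer_nonneg _ l) (layer_antitone _ hlt.le) (layer_le_one _ k)

theorem add_addLayers_le (h : LocallyDMC f) {x y : Fin n → ℤ} (hx : x ∈ effDom f)
    (hy : y ∈ effDom f) (hxy : x ≤ y) (J L : Finset ℕ) :
    f (addLayers x y J) + f (addLayers x y L) ≤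
      f (addLayers x y (J ∩ L)) + f (addLayers x y (J ∪ L)) :=
  add_le_inter_add_union_of_insert_exchange
    (g := fun J => f (addLayers x y J))
    (fun J => WithTop.addLECancellable_of_ne_top (h.1.addLayers_mem hx hy hxy J))
    (fun _ _ _ => h.addLayers_insert_exchange x y) J L

end LocallyDMC

/-- For a locally discrete midpoint convex function, discrete midpoint
convexity holds for all pairs `x ≤ y` (componentwise). -/
theorem locallyDMC_dmc_of_le {n : ℕ} (f : (Fin n → ℤ) → WithTop ℝ)
    (h : LocallyDMC f) (x y : Fin n → ℤ) (hxy : x ≤ y) :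
    DMCPair f x y := by
  by_cases hx : f x = ⊤
  · simp [DMCPair, hx]
  by_cases hy : f y = ⊤
  · simp [DMCPair, hy]
  let even := (Finset.range (linf (x - y))).image (2 * ·)
  let odd := (Finset.range (linf (x - y))).image (2 * · + 1)
  have heven : addLayers x y even = avgUp x y := addLayers_even hxy le_rfl
  have hodd : addLayers x y odd = avgDown x y := addLayers_odd hxy le_rfl
  have hdisj : Disjoint even odd := disjoint_image_even_image_odd _ _
  have hunion : addLayers x y (even ∪ odd) = y := by
    rw [addLayers_union hdisj, heven, hodd, avgUp_add_avgDown, add_sub_cancel_left]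
  have hsuper := h.add_addLayers_le hx hy hxy even odd
  rwa [Finset.disjoint_iff_inter_eq_empty.1 hdisj, addLayers_empty, hunion, heven, hodd] at hsuper
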